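/- Let K be a field and Λ a finite-dimensional associative unital K-algebra. Let f : P_1 → P_0 be a homomorphism of finitely generated projective left Λ-modules, let X = coker(f) with projection q : P_0 → X, and set T = ker(νf), where νf : νP_1 → νP_0 is the K-linear dual of Hom_Λ(f,Λ). Then for every finite-dimensional left Λ-module L there is an exact sequence of K-vector spaces 0 → Hom_Λ(L, T) → Hom_K(Hom_Λ(P_1, L), K) → Hom_K(Hom_Λ(P_0, L), K) → Hom_K(Hom_Λ(X, L), K) → 0, in which the middle map is the K-dual of precomposition with f, the last map is the K-dual of precomposition with q, and the first map is the composite of the map Hom_Λ(L,T) → Hom_Λ(L, νP_1) induced by the inclusion T ⊆ νP_1 with the natural isomorphism Hom_Λ(L, νP_1) ≅ Hom_K(Hom_Λ(P_1, L), K). -/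

import Mathlib

open LinearMap Module

variable (K Λ : Type*) [Field K] [Ring Λ] [Algebra K Λ]

section Nu

variable (P : Type*) [AddCommGroup P] [Module Λ P]

/-- Right multiplication `g ↦ g·a` on `Hom_Λ(P, Λ)`, where `(g·a)(p) = g(p) * a`. -/
def rmul (a : Λ) : (P →ₗ[Λ] Λ) →ₗ[K] (P →ₗ[Λ] Λ) where
  toFun g :=
    { toFun := fun p => g p * a
      map_add' := fun p q => by simp [add_mul]
      map_smul' := fun c p => by simp [smul_mul_assoc, mul_assoc] }
  map_add' g h := by ext p; simp [add_mul]
  map_smul' k g := by ext p; simp [smul_mul_assoc]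

@[simp] lemma rmul_apply (a : Λ) (g : P →ₗ[Λ] Λ) (p : P) :
    rmul K Λ P a g p = g p * a := rfl

lemma rmul_one (g : P →ₗ[Λ] Λ) : rmul K Λ P 1 g = g := by ext p; simp

lemma rmul_mul (a b : Λ) (g : P →ₗ[Λ] Λ) :
    rmul K Λ P (a * b) g = rmul K Λ P b (rmul K Λ P a g) := by ext p; simp [mul_assoc]

lemma rmul_add' (a b : Λ) (g : P →ₗ[Λ] Λ) :
    rmul K Λ P (a + b) g = rmul K Λ P a g + rmul K Λ P b g := by ext p; simp [mul_add]

lemma rmul_zero' (g : P →ₗ[Λ] Λ) : rmul K Λ P 0 g = 0 := by ext p; simp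

lemma rmul_ksmul (k : K) (a : Λ) (g : P →ₗ[Λ] Λ) :
    rmul K Λ P (k • a) g = k • rmul K Λ P a g := by ext p; simp [mul_smul_comm]

/-- `νP`, the `K`-linear dual of the right `Λ`-module `Hom_Λ(P, Λ)`. -/
abbrev Nu := (P →ₗ[Λ] Λ) →ₗ[K] K

instance : SMul Λ (Nu K Λ P) :=
  ⟨fun a φ => φ.comp (rmul K Λ P a)⟩

@[simp] lemma nu_smul_apply (a : Λ) (φ : Nu K Λ P) (g : P →ₗ[Λ] Λ) :
    (a • φ) g = φ (rmul K Λ P a g) := rfl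

/-- The left `Λ`-module structure on `νP` given by `(a • φ)(g) = φ(g · a)`. -/
instance : Module Λ (Nu K Λ P) where
  one_smul φ := by ext g; simp [rmul_one]
  mul_smul a b φ := by ext g; simp [rmul_mul]
  smul_zero a := by ext g; simp
  smul_add a φ ψ := by ext g; simp
  add_smul a b φ := by ext g; simp [rmul_add']
  zero_smul φ := by ext g; simp [rmul_zero']

instance : IsScalarTower K Λ (Nu K Λ P) :=
  ⟨fun k a φ => by ext g; simp [rmul_ksmul]⟩

instance : SMulCommClass Λ K (Nu K Λ P) :=
  ⟨fun a k φ => by ext g; simp⟩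

end Nu

section NuMap

variable (P₁ P₀ : Type*) [AddCommGroup P₁] [Module Λ P₁] [AddCommGroup P₀] [Module Λ P₀]

/-- Precomposition with `f`, as a map `Hom_Λ(P₀, Λ) → Hom_Λ(P₁, Λ)`. -/
def homf (f : P₁ →ₗ[Λ] P₀) : (P₀ →ₗ[Λ] Λ) →ₗ[K] (P₁ →ₗ[Λ] Λ) where
  toFun g := g.comp f
  map_add' g h := by ext p; simp
  map_smul' k g := by ext p; simp

@[simp] lemma homf_apply (f : P₁ →ₗ[Λ] P₀) (g : P₀ →ₗ[Λ] Λ) (p : P₁) :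
    homf K Λ P₁ P₀ f g p = g (f p) := rfl

/-- `νf : νP₁ → νP₀`, the `K`-linear dual of `Hom_Λ(f, Λ)`, as a map of left `Λ`-modules. -/
def nuMap (f : P₁ →ₗ[Λ] P₀) : Nu K Λ P₁ →ₗ[Λ] Nu K Λ P₀ where
  toFun φ := φ.comp (homf K Λ P₁ P₀ f)
  map_add' φ ψ := by ext g; simp
  map_smul' a φ := by
    ext g
    show φ (rmul K Λ P₁ a (homf K Λ P₁ P₀ f g)) = φ (homf K Λ P₁ P₀ f (rmul K Λ P₀ a g))
    congr 1

end NuMap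

section Precomp

variable (A B : Type*) [AddCommGroup A] [Module Λ A] [AddCommGroup B] [Module Λ B]
variable (L : Type*) [AddCommGroup L] [Module Λ L] [Module K L] [SMulCommClass Λ K L]

/-- Precomposition with `f : A → B`, as a `K`-linear map `Hom_Λ(B, L) → Hom_Λ(A, L)`. -/
def precomp (f : A →ₗ[Λ] B) : (B →ₗ[Λ] L) →ₗ[K] (A →ₗ[Λ] L) where
  toFun h := h.comp f
  map_add' g h := by ext p; simp
  map_smul' k g := by ext p; simp

/-- For `g : Hom_Λ(A, Λ)` and `ℓ ∈ L`, the `Λ`-linear map `p ↦ g(p) • ℓ`. -/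
def smulMap (g : A →ₗ[Λ] Λ) (ℓ : L) : A →ₗ[Λ] L where
  toFun p := g p • ℓ
  map_add' p q := by simp [add_smul]
  map_smul' c p := by simp [mul_smul]

end Precomp

/-! `Hom_Λ(L, νP)` is naturally the dual of `Hom_Λ(P, L)`: a functional `ξ` on `Hom_Λ(P, L)` gives
`ℓ ↦ (g ↦ ξ (g(-) • ℓ))`, and a finite dual basis of `P` both shows that the maps `g(-) • ℓ`
generate `Hom_Λ(P, L)` and provides a preimage of each `L → νP`. Under this identification
`νf ∘ -` becomes the dual of `- ∘ f`, so left exactness of `Hom_Λ(L, -)` on `0 → T → νP₁ → νP₀`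
gives the left half of the sequence; the right half is the `K`-dual of the left exact sequence
`0 → Hom_Λ(X, L) → Hom_Λ(P₀, L) → Hom_Λ(P₁, L)`. -/

section LeftExactness

variable {R M N N' : Type*} [Semiring R] [AddCommMonoid M] [AddCommMonoid N] [AddCommMonoid N']
  [Module R M] [Module R N] [Module R N']

lemma exists_subtype_ker_comp_eq_iff {h : N →ₗ[R] N'} {φ : M →ₗ[R] N} :
    (∃ ψ : M →ₗ[R] ker h, (ker h).subtype ∘ₗ ψ = φ) ↔ h ∘ₗ φ = 0 := by
  constructor
  · rintro ⟨ψ, rfl⟩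
    ext m
    exact (ψ m).2
  · intro hφ
    exact ⟨φ.codRestrict (ker h) (LinearMap.congr_fun hφ), subtype_comp_codRestrict _ _ _⟩

end LeftExactness

lemma exact_dualMap_of_exact {k U V W : Type*} [Field k] [AddCommGroup U] [Module k U]
    [AddCommGroup V] [Module k V] [AddCommGroup W] [Module k W]
    {f : U →ₗ[k] V} {g : V →ₗ[k] W} (hfg : Function.Exact f g) :
    Function.Exact g.dualMap f.dualMap := by
  rw [LinearMap.exact_iff, ker_dualMap_eq_dualAnnihilator_range,
    range_dualMap_eq_dualAnnihilator_ker, hfg.linearMap_ker_eq]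

section Precomp

variable {k R : Type*} [Field k] [Ring R]
variable {A B C : Type*} [AddCommGroup A] [Module R A] [AddCommGroup B] [Module R B]
  [AddCommGroup C] [Module R C]
variable {L : Type*} [AddCommGroup L] [Module R L] [Module k L] [SMulCommClass R k L]

lemma precomp_injective {q : B →ₗ[R] C} (hq : Function.Surjective q) :
    Function.Injective (precomp k R B C L q) :=
  hq.injective_linearMapComp_right

lemma exact_precomp {f : A →ₗ[R] B} {q : B →ₗ[R] C} (hfq : Function.Exact f q)
    (hq : Function.Surjective q) :
    Function.Exact (precomp k R B C L q) (precomp k R A B L f) := by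
  intro h
  constructor
  · intro hf
    let h' : (B ⧸ range f) →ₗ[R] L := (range f).liftQ h (range_le_ker_iff.2 hf)
    refine ⟨h' ∘ₗ (hfq.linearEquivOfSurjective hq).symm.toLinearMap, LinearMap.ext fun b => ?_⟩
    simp [precomp, h']
  · rintro ⟨g, rfl⟩
    ext a
    simp [precomp, hfq.apply_apply_eq_zero]

end Precomp

lemma exists_finite_dual_basis (R P : Type*) [Semiring R] [AddCommMonoid P] [Module R P]
    [Module.Finite R P] [Module.Projective R P] :
    ∃ (n : ℕ) (b : Fin n → P) (c : Fin n → (P →ₗ[R] R)), ∀ p, ∑ j, c j p • b j = p := by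
  obtain ⟨n, s, i, -, -, hsi⟩ := Module.Finite.exists_comp_eq_id_of_projective R P
  refine ⟨n, fun j => s (Pi.single j 1), fun j => proj j ∘ₗ i, fun p => ?_⟩
  calc ∑ j, i p j • s (Pi.single j 1) = s (∑ j, i p j • Pi.single j 1) := by
        simp only [map_sum, map_smul]
    _ = s (i p) := by rw [← pi_eq_sum_univ']
    _ = p := LinearMap.congr_fun hsi p

section SmulMap

variable {Λ}
variable {P L : Type*} [AddCommGroup P] [Module Λ P] [AddCommGroup L] [Module Λ L]

@[simp] lemma smulMap_apply (g : P →ₗ[Λ] Λ) (ℓ : L) (p : P) :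
    smulMap Λ P L g ℓ p = g p • ℓ := rfl

lemma smulMap_add_left (g h : P →ₗ[Λ] Λ) (ℓ : L) :
    smulMap Λ P L (g + h) ℓ = smulMap Λ P L g ℓ + smulMap Λ P L h ℓ := by
  ext p; simp [add_smul]

lemma smulMap_add_right (g : P →ₗ[Λ] Λ) (ℓ m : L) :
    smulMap Λ P L g (ℓ + m) = smulMap Λ P L g ℓ + smulMap Λ P L g m := by
  ext p; simp

lemma sum_smulMap_dual_basis {ι : Type*} [Fintype ι] {b : ι → P} {c : ι → (P →ₗ[Λ] Λ)}
    (hbc : ∀ p, ∑ j, c j p • b j = p) (h : P →ₗ[Λ] L) :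
    ∑ j, smulMap Λ P L (c j) (h (b j)) = h := by
  ext p
  calc (∑ j, smulMap Λ P L (c j) (h (b j))) p = h (∑ j, c j p • b j) := by
        simp [LinearMap.sum_apply]
    _ = h p := by rw [hbc]

lemma addMonoidHom_ext_smulMap [Module.Finite Λ P] [Module.Projective Λ P]
    {G : Type*} [AddCommMonoid G] {ξ ζ : (P →ₗ[Λ] L) →+ G}
    (h : ∀ g ℓ, ξ (smulMap Λ P L g ℓ) = ζ (smulMap Λ P L g ℓ)) : ξ = ζ := by
  obtain ⟨n, b, c, hbc⟩ := exists_finite_dual_basis Λ P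
  ext φ
  rw [← sum_smulMap_dual_basis hbc φ, map_sum, map_sum]
  exact Finset.sum_congr rfl fun j _ => h (c j) (φ (b j))

variable {K}

lemma smulMap_smul_right (g : P →ₗ[Λ] Λ) (a : Λ) (ℓ : L) :
    smulMap Λ P L g (a • ℓ) = smulMap Λ P L (rmul K Λ P a g) ℓ := by
  ext p; simp [mul_smul]

lemma rmul_eq_smulMap (a : Λ) (g : P →ₗ[Λ] Λ) : rmul K Λ P a g = smulMap Λ P Λ g a := rfl

variable [Module K L] [IsScalarTower K Λ L]

lemma smulMap_smul_left (k : K) (g : P →ₗ[Λ] Λ) (ℓ : L) :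
    smulMap Λ P L (k • g) ℓ = k • smulMap Λ P L g ℓ := by
  ext p; simp

end SmulMap

section HomNu

variable {K Λ}
variable {P P' : Type*} [AddCommGroup P] [Module Λ P] [AddCommGroup P'] [Module Λ P']
variable {L : Type*} [AddCommGroup L] [Module Λ L] [Module K L] [IsScalarTower K Λ L]

/-- The natural map from the dual of `Hom_Λ(P, L)` to `Hom_Λ(L, νP)`, sending `ξ` to
`ℓ ↦ (g ↦ ξ (g(-) • ℓ))`, for an arbitrary module `P`. -/
def dualHomToNu : ((P →ₗ[Λ] L) →ₗ[K] K) →ₗ[K] (L →ₗ[Λ] Nu K Λ P) where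
  toFun ξ :=
    { toFun := fun ℓ =>
        { toFun := fun g => ξ (smulMap Λ P L g ℓ)
          map_add' := fun g h => by rw [smulMap_add_left, map_add]
          map_smul' := fun k g => by rw [smulMap_smul_left, map_smul, RingHom.id_apply] }
      map_add' := fun ℓ m => LinearMap.ext fun g => by
        simp only [smulMap_add_right, map_add, LinearMap.add_apply, LinearMap.coe_mk,
          AddHom.coe_mk]
      map_smul' := fun a ℓ => LinearMap.ext fun g => congrArg ξ (smulMap_smul_right g a ℓ) }
  map_add' _ _ := rfl
  map_smul' _ _ := rfl

@[simp] lemma dualHomToNu_apply (ξ : (P →ₗ[Λ] L) →ₗ[K] K) (ℓ : L) (g : P →ₗ[Λ] Λ) :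
    dualHomToNu ξ ℓ g = ξ (smulMap Λ P L g ℓ) := rfl

lemma nuMap_comp_dualHomToNu (f : P →ₗ[Λ] P') (ξ : (P →ₗ[Λ] L) →ₗ[K] K) :
    nuMap K Λ P P' f ∘ₗ dualHomToNu ξ = dualHomToNu (ξ ∘ₗ precomp K Λ P P' L f) := rfl

variable [Module.Finite Λ P] [Module.Projective Λ P]

lemma dualHomToNu_injective :
    Function.Injective (dualHomToNu : ((P →ₗ[Λ] L) →ₗ[K] K) →ₗ[K] (L →ₗ[Λ] Nu K Λ P)) :=
  fun ξ ζ h => LinearMap.toAddMonoidHom_injective <|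
    addMonoidHom_ext_smulMap fun g ℓ =>
      show dualHomToNu ξ ℓ g = dualHomToNu ζ ℓ g by rw [h]

lemma dualHomToNu_surjective :
    Function.Surjective (dualHomToNu : ((P →ₗ[Λ] L) →ₗ[K] K) →ₗ[K] (L →ₗ[Λ] Nu K Λ P)) := by
  intro ψ
  obtain ⟨n, b, c, hbc⟩ := exists_finite_dual_basis Λ P
  let ξ : (P →ₗ[Λ] L) →ₗ[K] K :=
    ∑ j, applyₗ (c j) ∘ₗ ψ.restrictScalars K ∘ₗ applyₗ' K (b j)
  refine ⟨ξ, LinearMap.ext fun ℓ => LinearMap.ext fun g => ?_⟩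
  calc dualHomToNu ξ ℓ g = ∑ j, ψ (g (b j) • ℓ) (c j) := by simp [ξ, LinearMap.sum_apply]
    _ = ψ ℓ (∑ j, smulMap Λ P Λ (c j) (g (b j))) := by
        simp only [map_smul, nu_smul_apply, rmul_eq_smulMap, map_sum]
    _ = ψ ℓ g := by rw [sum_smulMap_dual_basis hbc]

/-- The natural isomorphism `Hom_Λ(L, νP) ≅ Hom_K(Hom_Λ(P, L), K)` for `P` finitely generated
projective, given through its inverse `dualHomToNu`. -/
noncomputable def homNuEquiv : (L →ₗ[Λ] Nu K Λ P) ≃ₗ[K] ((P →ₗ[Λ] L) →ₗ[K] K) :=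
  (LinearEquiv.ofBijective dualHomToNu ⟨dualHomToNu_injective, dualHomToNu_surjective⟩).symm

lemma homNuEquiv_symm_apply (ξ : (P →ₗ[Λ] L) →ₗ[K] K) (ℓ : L) (g : P →ₗ[Λ] Λ) :
    homNuEquiv.symm ξ ℓ g = ξ (smulMap Λ P L g ℓ) := rfl

variable (L) in
/-- The first map `Hom_Λ(L, ker νf) → Hom_K(Hom_Λ(P, L), K)` of the exact sequence: the inclusion
`ker νf ⊆ νP` followed by `homNuEquiv`. -/
noncomputable def homKerNuMapToDual (f : P →ₗ[Λ] P') :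
    (L →ₗ[Λ] ker (nuMap K Λ P P' f)) →ₗ[K] ((P →ₗ[Λ] L) →ₗ[K] K) :=
  homNuEquiv.toLinearMap ∘ₗ compRight K (ker (nuMap K Λ P P' f)).subtype

lemma homKerNuMapToDual_injective (f : P →ₗ[Λ] P') :
    Function.Injective (homKerNuMapToDual (K := K) L f) :=
  homNuEquiv.injective.comp (Submodule.injective_subtype _).injective_linearMapComp_left

lemma exact_homKerNuMapToDual [Module.Finite Λ P'] [Module.Projective Λ P'] (f : P →ₗ[Λ] P') :
    Function.Exact (homKerNuMapToDual L f) (precomp K Λ P P' L f).dualMap := by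
  intro ζ
  calc ζ ∘ₗ precomp K Λ P P' L f = 0
      ↔ nuMap K Λ P P' f ∘ₗ dualHomToNu ζ = 0 := by
        rw [nuMap_comp_dualHomToNu, map_eq_zero_iff _ dualHomToNu_injective]
    _ ↔ ∃ ψ : L →ₗ[Λ] ker (nuMap K Λ P P' f),
          (ker (nuMap K Λ P P' f)).subtype ∘ₗ ψ = dualHomToNu ζ :=
        exists_subtype_ker_comp_eq_iff.symm
    _ ↔ ζ ∈ Set.range (homKerNuMapToDual L f) :=
        exists_congr fun _ => homNuEquiv.eq_symm_apply

end HomNu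

theorem stmt2_general
    {P₁ P₀ X : Type*} [AddCommGroup P₁] [Module Λ P₁] [Module.Finite Λ P₁] [Module.Projective Λ P₁]
    [AddCommGroup P₀] [Module Λ P₀] [Module.Finite Λ P₀] [Module.Projective Λ P₀]
    [AddCommGroup X] [Module Λ X]
    {f : P₁ →ₗ[Λ] P₀} {q : P₀ →ₗ[Λ] X} (hfq : Function.Exact f q) (hq : Function.Surjective q)
    (L : Type*) [AddCommGroup L] [Module Λ L] [Module K L] [IsScalarTower K Λ L] :
    Function.Injective (homKerNuMapToDual (K := K) L f) ∧
      Function.Exact (homKerNuMapToDual L f) (precomp K Λ P₁ P₀ L f).dualMap ∧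
      Function.Exact (precomp K Λ P₁ P₀ L f).dualMap (precomp K Λ P₀ X L q).dualMap ∧
      Function.Surjective (precomp K Λ P₀ X L q).dualMap :=
  ⟨homKerNuMapToDual_injective f, exact_homKerNuMapToDual f,
    exact_dualMap_of_exact (exact_precomp hfq hq),
    dualMap_surjective_of_injective (precomp_injective hq)⟩

/-- **The exact sequence in the proof of Lemma `interp`.**  Let `f : P₁ → P₀` be a map of
finitely generated projective left `Λ`-modules, `X = coker f` (presented by a surjection
`q : P₀ → X` with `ker q = range f`), and `T = ker (νf)`.  Then for every
finite-dimensional `Λ`-module `L` there is an exact sequence of `K`-vector spaces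
`0 → Hom_Λ(L,T) → (Hom_Λ(P₁,L))^* → (Hom_Λ(P₀,L))^* → (Hom_Λ(X,L))^* → 0`,
where the middle map is the `K`-dual of precomposition with `f`, the last map is the
`K`-dual of precomposition with `q`, and the first map is the composite of
`ι_* : Hom_Λ(L,T) → Hom_Λ(L,νP₁)` with the natural isomorphism
`Hom_Λ(L, νP₁) ≅ (Hom_Λ(P₁,L))^*` (whose inverse sends `ξ` to `ℓ ↦ (g ↦ ξ(g(-) • ℓ))`). -/
theorem stmt2 [FiniteDimensional K Λ]
    (P₁ P₀ : Type*) [AddCommGroup P₁] [Module Λ P₁]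
    [Module.Finite Λ P₁] [Module.Projective Λ P₁]
    [AddCommGroup P₀] [Module Λ P₀] [Module.Finite Λ P₀] [Module.Projective Λ P₀]
    (f : P₁ →ₗ[Λ] P₀)
    (X : Type*) [AddCommGroup X] [Module Λ X]
    (q : P₀ →ₗ[Λ] X) (hq : Function.Surjective q)
    (hqf : LinearMap.ker q = LinearMap.range f)
    (L : Type*) [AddCommGroup L] [Module Λ L] [Module K L] [IsScalarTower K Λ L]
    [SMulCommClass Λ K L] [FiniteDimensional K L] :
    ∃ e : (L →ₗ[Λ] Nu K Λ P₁) ≃ₗ[K] ((P₁ →ₗ[Λ] L) →ₗ[K] K),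
      -- `e` is the natural isomorphism `Hom_Λ(L, νP₁) ≅ (Hom_Λ(P₁, L))^*`:
      (∀ (ξ : (P₁ →ₗ[Λ] L) →ₗ[K] K) (ℓ : L) (g : P₁ →ₗ[Λ] Λ),
          e.symm ξ ℓ g = ξ (smulMap Λ P₁ L g ℓ)) ∧
      -- exactness at `Hom_Λ(L, T)` (injectivity of the first map):
      Function.Injective (fun ψ : L →ₗ[Λ] ↥(LinearMap.ker (nuMap K Λ P₁ P₀ f)) =>
        e ((LinearMap.ker (nuMap K Λ P₁ P₀ f)).subtype.comp ψ)) ∧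
      -- exactness at `(Hom_Λ(P₁, L))^*`:
      (∀ ζ : (P₁ →ₗ[Λ] L) →ₗ[K] K,
        (∃ ψ : L →ₗ[Λ] ↥(LinearMap.ker (nuMap K Λ P₁ P₀ f)),
            e ((LinearMap.ker (nuMap K Λ P₁ P₀ f)).subtype.comp ψ) = ζ)
          ↔ ζ.comp (precomp K Λ P₁ P₀ L f) = 0) ∧
      -- exactness at `(Hom_Λ(P₀, L))^*`:
      (∀ η : (P₀ →ₗ[Λ] L) →ₗ[K] K,
        (∃ ζ : (P₁ →ₗ[Λ] L) →ₗ[K] K, ζ.comp (precomp K Λ P₁ P₀ L f) = η)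
          ↔ η.comp (precomp K Λ P₀ X L q) = 0) ∧
      -- exactness at `(Hom_Λ(X, L))^*` (surjectivity of the last map):
      Function.Surjective (fun η : (P₀ →ₗ[Λ] L) →ₗ[K] K =>
        η.comp (precomp K Λ P₀ X L q)) :=
  let ⟨inj, exact₁, exact₂, surj⟩ := stmt2_general K Λ (exact_iff.2 hqf) hq L
  ⟨homNuEquiv, homNuEquiv_symm_apply, inj, fun ζ => (exact₁ ζ).symm, fun η => (exact₂ η).symm, surj⟩
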